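/- Porosity of the free boundary: Let Ω ⊂ ℝⁿ be open and let f : [0,∞) → ℝ be continuous, non-decreasing, and satisfy both condition (1.2) with constants M > 0, γ ∈ [0,3) and condition (5.1) with constants N > 0 and the same γ. Let u ∈ C(Ω) be a bounded non-negative viscosity solution of Δ∞u = f(u) in Ω. Then for every open set Ω′ compactly contained in Ω there exists σ ∈ (0,1) such that the set ∂{u > 0} ∩ Ω′ is porous with porosity σ. -/

import Mathlib

open Set Metric Filter MeasureTheory

/-- The infinity Laplacian of a (C²) function `φ` at `x`:
`Δ∞φ(x) = Σ_{i,j} ∂_iφ(x) ∂_jφ(x) ∂_{ij}φ(x)`. -/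
noncomputable def infLap {n : ℕ} (φ : EuclideanSpace ℝ (Fin n) → ℝ)
    (x : EuclideanSpace ℝ (Fin n)) : ℝ :=
  ∑ i : Fin n, ∑ j : Fin n,
    fderiv ℝ φ x (EuclideanSpace.single i 1) * fderiv ℝ φ x (EuclideanSpace.single j 1) *
      fderiv ℝ (fun y => fderiv ℝ φ y (EuclideanSpace.single i 1)) x (EuclideanSpace.single j 1)

/-- `u` is a viscosity supersolution of `Δ∞u = F(x, u(x))` in `Ω`. -/
def IsViscSupersol {n : ℕ} (Ω : Set (EuclideanSpace ℝ (Fin n)))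
    (u : EuclideanSpace ℝ (Fin n) → ℝ)
    (F : EuclideanSpace ℝ (Fin n) → ℝ → ℝ) : Prop :=
  ∀ φ : EuclideanSpace ℝ (Fin n) → ℝ, ContDiff ℝ 2 φ →
    ∀ x₀ ∈ Ω, φ x₀ = u x₀ → IsLocalMin (fun x => u x - φ x) x₀ →
      infLap φ x₀ ≤ F x₀ (φ x₀)

/-- `u` is a viscosity subsolution of `Δ∞u = F(x, u(x))` in `Ω`. -/
def IsViscSubsol {n : ℕ} (Ω : Set (EuclideanSpace ℝ (Fin n)))
    (u : EuclideanSpace ℝ (Fin n) → ℝ)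
    (F : EuclideanSpace ℝ (Fin n) → ℝ → ℝ) : Prop :=
  ∀ φ : EuclideanSpace ℝ (Fin n) → ℝ, ContDiff ℝ 2 φ →
    ∀ x₀ ∈ Ω, φ x₀ = u x₀ → IsLocalMax (fun x => u x - φ x) x₀ →
      F x₀ (φ x₀) ≤ infLap φ x₀

/-- `u` is a viscosity solution of `Δ∞u = F(x, u(x))` in `Ω`. -/
def IsViscSol {n : ℕ} (Ω : Set (EuclideanSpace ℝ (Fin n)))
    (u : EuclideanSpace ℝ (Fin n) → ℝ)
    (F : EuclideanSpace ℝ (Fin n) → ℝ → ℝ) : Prop :=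
  IsViscSupersol Ω u F ∧ IsViscSubsol Ω u F

/-- Condition (1.2): for every `T > 0` there is `δ₀ > 0` such that
`0 ≤ f(δt) ≤ M δ^γ f(t)` for all `0 < t ≤ T` and `0 < δ ≤ δ₀`. -/
def Cond12 (f : ℝ → ℝ) (M γ : ℝ) : Prop :=
  ∀ T > 0, ∃ δ₀ > 0, ∀ t : ℝ, 0 < t → t ≤ T → ∀ δ : ℝ, 0 < δ → δ ≤ δ₀ →
    0 ≤ f (δ * t) ∧ f (δ * t) ≤ M * δ ^ γ * f t

/-- Condition (5.1): for every `T > 0` there is `δ₀ > 0` such that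
`f(δt) ≥ N δ^γ f(t) ≥ 0` for all `0 < t ≤ T` and `0 < δ ≤ δ₀`. -/
def Cond51 (f : ℝ → ℝ) (N γ : ℝ) : Prop :=
  ∀ T > 0, ∃ δ₀ > 0, ∀ t : ℝ, 0 < t → t ≤ T → ∀ δ : ℝ, 0 < δ → δ ≤ δ₀ →
    N * δ ^ γ * f t ≤ f (δ * t) ∧ 0 ≤ N * δ ^ γ * f t

/-- `E` is porous with porosity `σ`. -/
def IsPorousWith {n : ℕ} (E : Set (EuclideanSpace ℝ (Fin n))) (σ : ℝ) : Prop :=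
  ∃ R > (0 : ℝ), ∀ x ∈ E, ∀ r : ℝ, 0 < r → r < R →
    ∃ y : EuclideanSpace ℝ (Fin n), ball y (σ * r) ⊆ ball x r \ E

/-!
Conditions (1.2) and (5.1) force either `f ≡ 0`, or `k t ^ γ ≤ f t ≤ K t ^ γ` on bounded intervals
with `0 < k`. In the second case put `α = 4 / (3 - γ)`. Comparing `u` with `A (R - |x - y|) ^ α`
shows that `u > 0` on `ball y R` as soon as `A R ^ α ≤ u y`; comparing it with (a smoothing of)
`a |x - y| ^ α` shows that `u` reaches the height `a r ^ α` within distance `r` of every point where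
it is positive. Hence within distance `r / 2` of a free boundary point there is some `z` with
`a (r / 4) ^ α ≤ u z`, and `u` is then positive on a ball of radius `σ r` about `z`, which therefore
misses the free boundary. If `f ≡ 0`, the first barrier works with arbitrarily small `A > 0` and the
free boundary in `Ω` is empty.
-/

section NormSq

open scoped Gradient

variable {H : Type*} [NormedAddCommGroup H] [InnerProductSpace ℝ H]

theorem fderiv_norm_sub_sq (y : H) :
    fderiv ℝ (fun z => ‖z - y‖ ^ 2) = fun z => (2 : ℝ) • innerSL ℝ (z - y) := by
  ext z v
  have hderiv : HasFDerivAt (fun z => ‖z - y‖ ^ 2) _ z := ((hasFDerivAt_id z).sub_const y).norm_sq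
  simp [hderiv.fderiv]

theorem gradient_norm_sub_sq [CompleteSpace H] (x y : H) :
    ∇ (fun z => ‖z - y‖ ^ 2) x = (2 : ℝ) • (x - y) := by
  refine ext_inner_right ℝ fun v => ?_
  simp [fderiv_norm_sub_sq, inner_gradient_left, inner_smul_left, inner_sub_left]

end NormSq

section InfinityLaplacian

open scoped Topology Gradient

variable {n : ℕ} {φ ψ : EuclideanSpace ℝ (Fin n) → ℝ} {x y : EuclideanSpace ℝ (Fin n)}

theorem infLap_congr_of_eventuallyEq (h : φ =ᶠ[𝓝 x] ψ) : infLap φ x = infLap ψ x := by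
  have hfderiv_apply (v : EuclideanSpace ℝ (Fin n)) :
      (fun y => fderiv ℝ φ y v) =ᶠ[𝓝 x] fun y => fderiv ℝ ψ y v :=
    h.fderiv.fun_comp fun L => L v
  simp only [infLap, h.fderiv_eq, (hfderiv_apply _).fderiv_eq]

theorem infLap_add_const (φ : EuclideanSpace ℝ (Fin n) → ℝ) (c : ℝ) :
    infLap (fun z => φ z + c) x = infLap φ x := by
  simp only [infLap, fderiv_add_const]

theorem infLap_neg (φ : EuclideanSpace ℝ (Fin n) → ℝ) :
    infLap (fun z => -φ z) x = -infLap φ x := by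
  simp only [infLap, fderiv_fun_neg, neg_apply, ← Finset.sum_neg_distrib]
  ring_nf

theorem infLap_eq_fderiv_fderiv_gradient (hφ : DifferentiableAt ℝ (fderiv ℝ φ) x) :
    infLap φ x = fderiv ℝ (fderiv ℝ φ) x (∇ φ x) (∇ φ x) := by
  have hgradient :
      ∇ φ x = ∑ i, fderiv ℝ φ x (EuclideanSpace.single i 1) • EuclideanSpace.single i 1 := by
    rw [← (EuclideanSpace.basisFun (Fin n) ℝ).sum_repr' (∇ φ x)]
    simp only [EuclideanSpace.basisFun_apply, inner_gradient_right, conj_trivial]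
  have hsecond (v w : EuclideanSpace ℝ (Fin n)) :
      fderiv ℝ (fun y => fderiv ℝ φ y v) x w = fderiv ℝ (fderiv ℝ φ) x w v := by
    simp [fderiv_clm_apply hφ (differentiableAt_const v)]
  simp only [infLap, hsecond]
  rw [hgradient]
  simp only [map_sum, map_smul, sum_apply, smul_apply, smul_eq_mul, Finset.mul_sum,
    mul_assoc]

theorem infLap_comp {g g' : ℝ → ℝ} {g'' : ℝ} (hψ : ContDiffAt ℝ 2 ψ x)
    (hg : ∀ᶠ t in 𝓝 (ψ x), HasDerivAt g (g' t) t) (hg' : HasDerivAt g' g'' (ψ x)) :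
    infLap (fun z => g (ψ z)) x =
      g' (ψ x) ^ 3 * infLap ψ x + g' (ψ x) ^ 2 * g'' * ‖∇ ψ x‖ ^ 4 := by
  have hdiff : ∀ᶠ z in 𝓝 x, DifferentiableAt ℝ ψ z :=
    (hψ.eventually (by simp)).mono fun z hz => hz.differentiableAt (by simp)
  have hψ' : DifferentiableAt ℝ (fderiv ℝ ψ) x :=
    (hψ.fderiv_right (m := 1) (by norm_num)).differentiableAt (by simp)
  have hfderiv : fderiv ℝ (fun z => g (ψ z)) =ᶠ[𝓝 x] fun z => g' (ψ z) • fderiv ℝ ψ z := by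
    filter_upwards [hψ.continuousAt.eventually hg, hdiff] with z hgz hψz
    exact (hgz.comp_hasFDerivAt z hψz.hasFDerivAt).fderiv
  have hfderiv₂ := ((hg'.comp_hasFDerivAt x hdiff.self_of_nhds.hasFDerivAt).smul
    hψ'.hasFDerivAt).congr_of_eventuallyEq hfderiv
  have hgradient : ∇ (fun z => g (ψ z)) x = g' (ψ x) • ∇ ψ x := by
    simp [gradient, hfderiv.self_of_nhds]
  have hself : fderiv ℝ ψ x (∇ ψ x) = ‖∇ ψ x‖ ^ 2 := by
    rw [← real_inner_self_eq_norm_sq, inner_gradient_left]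
  rw [infLap_eq_fderiv_fderiv_gradient hfderiv₂.differentiableAt, hfderiv₂.fderiv, hgradient,
    infLap_eq_fderiv_fderiv_gradient hψ']
  simp only [Function.comp_apply, map_smul, add_apply, smul_apply,
    ContinuousLinearMap.smulRight_apply, hself, smul_eq_mul, smul_add]
  ring

theorem infLap_norm_sub_sq (x y : EuclideanSpace ℝ (Fin n)) :
    infLap (fun z => ‖z - y‖ ^ 2) x = 8 * ‖x - y‖ ^ 2 := by
  have hfderiv₂ : HasFDerivAt (fun z => (2 : ℝ) • innerSL ℝ (z - y)) ((2 : ℝ) • innerSL ℝ) x :=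
    (((innerSL ℝ).hasFDerivAt).comp x ((hasFDerivAt_id x).sub_const y)).const_smul (2 : ℝ)
  have hself (v : EuclideanSpace ℝ (Fin n)) : ((2 : ℝ) • innerSL ℝ :
      EuclideanSpace ℝ (Fin n) →L[ℝ] EuclideanSpace ℝ (Fin n) →L[ℝ] ℝ) v v = 2 * ‖v‖ ^ 2 :=
    congrArg (2 * ·) (real_inner_self_eq_norm_sq v)
  rw [← fderiv_norm_sub_sq] at hfderiv₂
  rw [infLap_eq_fderiv_fderiv_gradient hfderiv₂.differentiableAt, hfderiv₂.fderiv,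
    gradient_norm_sub_sq, hself, norm_smul, Real.norm_two]
  ring

theorem infLap_comp_norm_sub_sq {h h' : ℝ → ℝ} {h'' : ℝ}
    (hh : ∀ᶠ t in 𝓝 (‖x - y‖ ^ 2), HasDerivAt h (h' t) t)
    (hh' : HasDerivAt h' h'' (‖x - y‖ ^ 2)) :
    infLap (fun z => h (‖z - y‖ ^ 2)) x =
      8 * ‖x - y‖ ^ 2 * h' (‖x - y‖ ^ 2) ^ 2 *
        (h' (‖x - y‖ ^ 2) + 2 * ‖x - y‖ ^ 2 * h'') := by
  have hsmooth : ContDiffAt ℝ 2 (fun z => ‖z - y‖ ^ 2) x :=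
    (contDiffAt_id.sub contDiffAt_const).norm_sq ℝ
  rw [infLap_comp hsmooth hh hh', infLap_norm_sub_sq, gradient_norm_sub_sq, norm_smul,
    Real.norm_two]
  ring

theorem infLap_comp_norm_sub {g g' : ℝ → ℝ} {g'' : ℝ} (hxy : x ≠ y)
    (hg : ∀ᶠ t in 𝓝 ‖x - y‖, HasDerivAt g (g' t) t) (hg' : HasDerivAt g' g'' ‖x - y‖) :
    infLap (fun z => g ‖z - y‖) x = g' ‖x - y‖ ^ 2 * g'' := by
  have hpos : 0 < ‖x - y‖ := norm_sub_pos_iff.2 hxy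
  have hsqrt : √(‖x - y‖ ^ 2) = ‖x - y‖ := Real.sqrt_sq hpos.le
  have hsq_ne : ‖x - y‖ ^ 2 ≠ 0 := by positivity
  have hfirst : ∀ᶠ t in 𝓝 (‖x - y‖ ^ 2),
      HasDerivAt (fun t => g √t) (g' √t / (2 * √t)) t := by
    have hg_sqrt : ∀ᶠ t in 𝓝 (‖x - y‖ ^ 2), HasDerivAt g (g' √t) √t :=
      (Real.continuous_sqrt.tendsto _).eventually (hsqrt.symm ▸ hg)
    filter_upwards [hg_sqrt, eventually_ne_nhds hsq_ne] with t hgt ht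
    exact (hgt.comp t (Real.hasDerivAt_sqrt ht)).congr_deriv (by ring)
  have hsecond := ((hsqrt.symm ▸ hg' : HasDerivAt g' g'' √(‖x - y‖ ^ 2)).comp _
    (Real.hasDerivAt_sqrt hsq_ne)).div ((Real.hasDerivAt_sqrt hsq_ne).const_mul 2)
    (by rw [hsqrt]; positivity)
  have hradial := infLap_comp_norm_sub_sq hfirst hsecond
  simp only [Function.comp_apply, Real.sqrt_sq (norm_nonneg _)] at hradial
  rw [hradial]
  field_simp
  ring

end InfinityLaplacian

section ViscosityComparison

open scoped Topology

variable {n : ℕ} {Ω Ω' C : Set (EuclideanSpace ℝ (Fin n))}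
  {u v φ : EuclideanSpace ℝ (Fin n) → ℝ} {F G : EuclideanSpace ℝ (Fin n) → ℝ → ℝ}
  {x : EuclideanSpace ℝ (Fin n)}

theorem IsViscSupersol.mono (hu : IsViscSupersol Ω u F) (hΩ : Ω' ⊆ Ω)
    (hFG : ∀ x ∈ Ω', F x (u x) ≤ G x (u x)) : IsViscSupersol Ω' u G := by
  intro φ hφ x hx hφu hmin
  have hle := hu φ hφ x (hΩ hx) hφu hmin
  rw [hφu] at hle ⊢
  exact hle.trans (hFG x hx)

theorem IsViscSubsol.mono (hu : IsViscSubsol Ω u F) (hΩ : Ω' ⊆ Ω)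
    (hGF : ∀ x ∈ Ω', G x (u x) ≤ F x (u x)) : IsViscSubsol Ω' u G := by
  intro φ hφ x hx hφu hmax
  have hle := hu φ hφ x (hΩ hx) hφu hmax
  rw [hφu] at hle ⊢
  exact (hGF x hx).trans hle

theorem IsViscSubsol.neg (hu : IsViscSubsol Ω u F) :
    IsViscSupersol Ω (fun x => -u x) (fun x t => -F x (-t)) := by
  intro φ hφ x hx hφu hmin
  have hmax : IsLocalMax (fun z => u z - -φ z) x := by
    filter_upwards [hmin] with z hz
    linarith
  have hle := hu (fun z => -φ z) hφ.neg x hx (by rw [hφu, neg_neg]) hmax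
  rw [infLap_neg] at hle
  linarith

theorem exists_contDiff_eventuallyEq_of_contDiffAt {E F : Type*} [NormedAddCommGroup E]
    [NormedSpace ℝ E] [HasContDiffBump E] [NormedAddCommGroup F] [NormedSpace ℝ F]
    {k : ℕ} {φ : E → F} {x : E} (hφ : ContDiffAt ℝ k φ x) :
    ∃ ψ : E → F, ContDiff ℝ k ψ ∧ φ =ᶠ[𝓝 x] ψ := by
  obtain ⟨ε, hε, hball⟩ := eventually_nhds_iff_ball.1 (hφ.eventually (by simp))
  let b : ContDiffBump x := ⟨ε / 4, ε / 2, by positivity, by linarith⟩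
  refine ⟨fun y => b y • φ y, contDiff_iff_contDiffAt.2 fun y => ?_, ?_⟩
  · by_cases hy : y ∈ tsupport fun y => b y • φ y
    · have hyb : y ∈ closedBall x (ε / 2) := b.tsupport_eq ▸ tsupport_smul_subset_left _ _ hy
      exact b.contDiffAt.smul (hball y (closedBall_subset_ball (by linarith) hyb))
    · exact contDiffAt_const.congr_of_eventuallyEq (notMem_tsupport_iff_eventuallyEq.1 hy)
  · filter_upwards [b.eventuallyEq_one] with y hy
    simp [hy]

theorem IsViscSupersol.infLap_le_of_contDiffAt (hu : IsViscSupersol Ω u F) (hx : x ∈ Ω)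
    (hφ : ContDiffAt ℝ 2 φ x) (hφu : φ x = u x) (hmin : IsLocalMin (fun z => u z - φ z) x) :
    infLap φ x ≤ F x (u x) := by
  obtain ⟨ψ, hψ, hφψ⟩ := exists_contDiff_eventuallyEq_of_contDiffAt (k := 2) hφ
  have hψu : ψ x = u x := hφψ.eq_of_nhds ▸ hφu
  have hmin' : IsLocalMin (fun z => u z - ψ z) x :=
    hmin.congr (hφψ.mono fun z hz => congrArg (u z - ·) hz)
  simpa only [infLap_congr_of_eventuallyEq hφψ, hψu] using hu ψ hψ x hx hψu hmin'

theorem IsViscSupersol.ge_of_forall_lt_infLap (hu : IsViscSupersol C u F) (hC : IsCompact C)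
    (huc : ContinuousOn u C) (hvc : ContinuousOn v C)
    (hv : ∀ x ∈ C, u x < v x → x ∈ interior C ∧ ContDiffAt ℝ 2 v x ∧ F x (u x) < infLap v x) :
    ∀ x ∈ C, v x ≤ u x := by
  intro y hy
  obtain ⟨x, hx, hmin⟩ := hC.exists_isMinOn ⟨y, hy⟩ (huc.sub hvc)
  replace hmin : ∀ z ∈ C, u x - v x ≤ u z - v z := hmin
  by_contra! hlt
  obtain ⟨hx_int, hvx, hFx⟩ := hv x hx (by linarith [hmin y hy])
  have htouch : IsLocalMin (fun z => u z - (v z + (u x - v x))) x := by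
    filter_upwards [mem_interior_iff_mem_nhds.1 hx_int] with z hz
    linarith [hmin z hz]
  have hle := hu.infLap_le_of_contDiffAt hx (hvx.add contDiffAt_const) (by ring) htouch
  rw [infLap_add_const] at hle
  exact hle.not_gt hFx

theorem IsViscSubsol.le_of_forall_infLap_lt (hu : IsViscSubsol C u F) (hC : IsCompact C)
    (huc : ContinuousOn u C) (hvc : ContinuousOn v C)
    (hv : ∀ x ∈ C, v x < u x → x ∈ interior C ∧ ContDiffAt ℝ 2 v x ∧ infLap v x < F x (u x)) :
    ∀ x ∈ C, u x ≤ v x := by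
  intro x hx
  refine neg_le_neg_iff.1
    (hu.neg.ge_of_forall_lt_infLap (v := fun x => -v x) hC huc.neg hvc.neg ?_ x hx)
  intro z hz hlt
  obtain ⟨hz_int, hvz, hFz⟩ := hv z hz (neg_lt_neg_iff.1 hlt)
  exact ⟨hz_int, hvz.neg, by simpa only [infLap_neg, neg_neg, neg_lt_neg_iff] using hFz⟩

end ViscosityComparison

section GrowthExponent

variable {γ : ℝ}

/-- The exponent `α = 4 / (3 - γ)` with which solutions of `Δ∞u = u ^ γ` grow away from their
zero set; it is the one for which `Δ∞(|x| ^ α)` is a multiple of `(|x| ^ α) ^ γ`. -/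
noncomputable def growthExponent (γ : ℝ) : ℝ := 4 / (3 - γ)

theorem growthExponent_mul (hγ : γ < 3) : growthExponent γ * γ = 3 * growthExponent γ - 4 := by
  have hne : 3 - γ ≠ 0 := by linarith
  rw [growthExponent]
  field_simp
  ring

theorem one_lt_growthExponent (hγ₀ : 0 ≤ γ) (hγ₃ : γ < 3) : 1 < growthExponent γ := by
  rw [growthExponent, one_lt_div (by linarith)]
  linarith

theorem growthExponent_pow_three_mul_sub_one_pos (hγ₀ : 0 ≤ γ) (hγ₃ : γ < 3) :
    0 < growthExponent γ ^ 3 * (growthExponent γ - 1) := by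
  have hα := one_lt_growthExponent hγ₀ hγ₃
  exact mul_pos (pow_pos (one_pos.trans hα) 3) (sub_pos.2 hα)

theorem exists_pow_three_eq_mul_rpow {L : ℝ} (hγ : γ < 3) (hL : 0 < L) :
    ∃ A > 0, A ^ 3 = L * A ^ γ := by
  have hne : 3 - γ ≠ 0 := by linarith
  set A := L ^ (1 / (3 - γ)) with hA
  have hA_pos : 0 < A := by positivity
  have hA_rpow : A ^ (3 - γ) = L := by
    rw [hA, ← Real.rpow_mul hL.le, one_div_mul_cancel hne, Real.rpow_one]
  refine ⟨A, hA_pos, ?_⟩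
  rw [← hA_rpow, ← Real.rpow_add hA_pos, sub_add_cancel]
  norm_cast

end GrowthExponent

section Barriers

open scoped Topology

variable {n : ℕ} {x y : EuclideanSpace ℝ (Fin n)}

theorem infLap_mul_sub_norm_rpow (A α : ℝ) {R : ℝ} (hxy : x ≠ y) (hxR : ‖x - y‖ < R) :
    infLap (fun z => A * (R - ‖z - y‖) ^ α) x =
      α ^ 3 * (α - 1) * A ^ 3 * (R - ‖x - y‖) ^ (3 * α - 4) := by
  have hderiv (b : ℝ) {t : ℝ} (ht : t < R) :
      HasDerivAt (fun t => (R - t) ^ b) (-(b * (R - t) ^ (b - 1))) t :=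
    (((hasDerivAt_id t).const_sub R).rpow_const (p := b) (Or.inl (sub_pos.2 ht).ne')).congr_deriv
      (by simp)
  have hfirst : ∀ᶠ t in 𝓝 ‖x - y‖,
      HasDerivAt (fun t => A * (R - t) ^ α) (A * -(α * (R - t) ^ (α - 1))) t :=
    (eventually_lt_nhds hxR).mono fun t ht => (hderiv α ht).const_mul A
  have hsecond := (((hderiv (α - 1) hxR).const_mul α).neg).const_mul A
  rw [infLap_comp_norm_sub hxy hfirst hsecond]
  have hq : 0 < R - ‖x - y‖ := sub_pos.2 hxR
  have hpow : (R - ‖x - y‖) ^ (3 * α - 4) =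
      ((R - ‖x - y‖) ^ (α - 1)) ^ 2 * (R - ‖x - y‖) ^ (α - 1 - 1) := by
    rw [← Real.rpow_mul_natCast hq.le, ← Real.rpow_add hq]
    push_cast
    ring_nf
  rw [hpow]
  ring

theorem infLap_mul_norm_sq_add_rpow (a β : ℝ) {e : ℝ} (he : 0 < e) :
    infLap (fun z => a * (‖z - y‖ ^ 2 + e) ^ β) x =
      8 * a ^ 3 * β ^ 3 * (‖x - y‖ ^ 2 + e) ^ (3 * β - 4) *
        (‖x - y‖ ^ 2 * (‖x - y‖ ^ 2 + e + 2 * (β - 1) * ‖x - y‖ ^ 2)) := by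
  have hderiv (b : ℝ) {t : ℝ} (ht : -e < t) :
      HasDerivAt (fun t => (t + e) ^ b) (b * (t + e) ^ (b - 1)) t :=
    (((hasDerivAt_id t).add_const e).rpow_const (p := b)
      (Or.inl (neg_lt_iff_pos_add.1 ht).ne')).congr_deriv (by simp)
  have hx : -e < ‖x - y‖ ^ 2 := (neg_neg_of_pos he).trans_le (sq_nonneg _)
  have hfirst : ∀ᶠ t in 𝓝 (‖x - y‖ ^ 2),
      HasDerivAt (fun t => a * (t + e) ^ β) (a * (β * (t + e) ^ (β - 1))) t :=
    (eventually_gt_nhds hx).mono fun t ht => (hderiv β ht).const_mul a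
  have hsecond := ((hderiv (β - 1) hx).const_mul β).const_mul a
  rw [infLap_comp_norm_sub_sq hfirst hsecond]
  have hP : 0 < ‖x - y‖ ^ 2 + e := by positivity
  have hpow₁ : (‖x - y‖ ^ 2 + e) ^ (β - 1) =
      (‖x - y‖ ^ 2 + e) ^ (β - 1 - 1) * (‖x - y‖ ^ 2 + e) := by
    rw [← Real.rpow_add_one hP.ne', sub_add_cancel]
  have hpow₂ : (‖x - y‖ ^ 2 + e) ^ (3 * β - 4) =
      ((‖x - y‖ ^ 2 + e) ^ (β - 1 - 1)) ^ 3 * (‖x - y‖ ^ 2 + e) ^ 2 := by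
    rw [← Real.rpow_mul_natCast hP.le, ← Real.rpow_add_natCast hP.ne']
    push_cast
    ring_nf
  rw [hpow₁, hpow₂]
  ring

theorem infLap_mul_norm_sq_add_rpow_le {a β e : ℝ} (ha : 0 ≤ a) (hβ : 1 / 2 ≤ β) (he : 0 < e) :
    infLap (fun z => a * (‖z - y‖ ^ 2 + e) ^ β) x ≤
      (2 * β) ^ 4 * a ^ 3 * (‖x - y‖ ^ 2 + e) ^ (3 * β - 2) := by
  have hP : 0 < ‖x - y‖ ^ 2 + e := by positivity
  have hpow : (‖x - y‖ ^ 2 + e) ^ (3 * β - 2) =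
      (‖x - y‖ ^ 2 + e) ^ (3 * β - 4) * (‖x - y‖ ^ 2 + e) ^ 2 := by
    rw [← Real.rpow_add_natCast hP.ne']
    push_cast
    ring_nf
  have hquad : ‖x - y‖ ^ 2 * (‖x - y‖ ^ 2 + e + 2 * (β - 1) * ‖x - y‖ ^ 2) ≤
      2 * β * (‖x - y‖ ^ 2 + e) ^ 2 := by
    have := sq_nonneg ‖x - y‖
    nlinarith [mul_nonneg this he.le, sq_nonneg e]
  calc infLap (fun z => a * (‖z - y‖ ^ 2 + e) ^ β) x
      ≤ 8 * a ^ 3 * β ^ 3 * (‖x - y‖ ^ 2 + e) ^ (3 * β - 4) *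
          (2 * β * (‖x - y‖ ^ 2 + e) ^ 2) := by
        rw [infLap_mul_norm_sq_add_rpow a β he]
        gcongr
    _ = (2 * β) ^ 4 * a ^ 3 * (‖x - y‖ ^ 2 + e) ^ (3 * β - 2) := by
        rw [hpow]
        ring

end Barriers

section Growth

/-- Growth control of exponent `α` in `Ω`, in contrapositive form: `u` has no zero in
`ball y R` once `A * R ^ α ≤ u y`, so at a zero `x` it satisfies `u y ≤ A * dist x y ^ α`. -/
def HasGrowthControl {X : Type*} [PseudoMetricSpace X] (Ω : Set X) (u : X → ℝ) (A α : ℝ) : Prop :=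
  ∀ ⦃y : X⦄ ⦃R : ℝ⦄, 0 < R → closedBall y R ⊆ Ω → A * R ^ α ≤ u y → ∀ x ∈ ball y R, 0 < u x

/-- Nondegeneracy of exponent `α` in `Ω`: around every positive point, `u` reaches the height
`a * r ^ α` within distance `r`. -/
def IsNondegenerate {X : Type*} [PseudoMetricSpace X] (Ω : Set X) (u : X → ℝ) (a α : ℝ) : Prop :=
  ∀ ⦃y : X⦄ ⦃r : ℝ⦄, 0 < r → closedBall y r ⊆ Ω → 0 < u y → ∃ z ∈ closedBall y r, a * r ^ α ≤ u z

variable {n : ℕ} {Ω : Set (EuclideanSpace ℝ (Fin n))} {u : EuclideanSpace ℝ (Fin n) → ℝ}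
  {y : EuclideanSpace ℝ (Fin n)} {γ : ℝ}

theorem IsViscSupersol.mul_sub_norm_rpow_le {K A R : ℝ}
    (hu : IsViscSupersol (closedBall y R) u fun _ t => K * t ^ γ)
    (huc : ContinuousOn u (closedBall y R)) (hu₀ : ∀ x ∈ closedBall y R, 0 ≤ u x)
    (hγ₀ : 0 ≤ γ) (hγ₃ : γ < 3) (hK : 0 ≤ K) (hA : 0 ≤ A)
    (hKA : K * A ^ γ < growthExponent γ ^ 3 * (growthExponent γ - 1) * A ^ 3)
    (huy : A * R ^ growthExponent γ ≤ u y) :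
    ∀ x ∈ closedBall y R, A * (R - ‖x - y‖) ^ growthExponent γ ≤ u x := by
  have hα := one_lt_growthExponent hγ₀ hγ₃
  have hαγ := growthExponent_mul hγ₃
  set α := growthExponent γ
  refine hu.ge_of_forall_lt_infLap (isCompact_closedBall y R) huc ?_ fun x hx hlt => ?_
  · exact Continuous.continuousOn (continuous_const.mul
      (Continuous.rpow_const (by fun_prop) fun _ => Or.inr (by linarith)))
  have hxy : x ≠ y := by
    rintro rfl
    rw [sub_self, norm_zero, sub_zero] at hlt
    exact hlt.not_ge huy
  have hxR : ‖x - y‖ < R := by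
    refine lt_of_le_of_ne (mem_closedBall_iff_norm.1 hx) fun heq => ?_
    rw [heq, sub_self, Real.zero_rpow (by linarith), mul_zero] at hlt
    exact hlt.not_ge (hu₀ x hx)
  have hq : 0 < R - ‖x - y‖ := sub_pos.2 hxR
  refine ⟨ball_subset_interior_closedBall (mem_ball_iff_norm.2 hxR), ?_, ?_⟩
  · have hnorm : ContDiffAt ℝ 2 (fun z => ‖z - y‖) x :=
      (contDiffAt_id.sub contDiffAt_const).norm ℝ (sub_ne_zero.2 hxy)
    exact contDiffAt_const.mul ((contDiffAt_const.sub hnorm).rpow_const_of_ne hq.ne')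
  · calc K * u x ^ γ ≤ K * (A * (R - ‖x - y‖) ^ α) ^ γ := by
          gcongr
          exact hu₀ x hx
      _ = K * A ^ γ * (R - ‖x - y‖) ^ (3 * α - 4) := by
          rw [Real.mul_rpow hA (by positivity), ← Real.rpow_mul hq.le, hαγ, mul_assoc]
      _ < α ^ 3 * (α - 1) * A ^ 3 * (R - ‖x - y‖) ^ (3 * α - 4) := by gcongr
      _ = infLap (fun z => A * (R - ‖z - y‖) ^ α) x :=
          (infLap_mul_sub_norm_rpow A α hxy hxR).symm

theorem IsViscSupersol.hasGrowthControl_of_lt {K A : ℝ}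
    (hu : IsViscSupersol Ω u fun _ t => K * t ^ γ)
    (huc : ContinuousOn u Ω) (hu₀ : ∀ x ∈ Ω, 0 ≤ u x)
    (hγ₀ : 0 ≤ γ) (hγ₃ : γ < 3) (hK : 0 ≤ K) (hA : 0 < A)
    (hKA : K * A ^ γ < growthExponent γ ^ 3 * (growthExponent γ - 1) * A ^ 3) :
    HasGrowthControl Ω u A (growthExponent γ) := by
  intro y R _ hsub huy x hx
  have hbarrier := (hu.mono hsub fun _ _ => le_rfl).mul_sub_norm_rpow_le (huc.mono hsub)
    (fun z hz => hu₀ z (hsub hz)) hγ₀ hγ₃ hK hA.le hKA huy x (ball_subset_closedBall hx)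
  have hq : 0 < R - ‖x - y‖ := sub_pos.2 (mem_ball_iff_norm.1 hx)
  exact lt_of_lt_of_le (by positivity) hbarrier

theorem IsViscSupersol.exists_hasGrowthControl {K : ℝ}
    (hu : IsViscSupersol Ω u fun _ t => K * t ^ γ)
    (huc : ContinuousOn u Ω) (hu₀ : ∀ x ∈ Ω, 0 ≤ u x)
    (hγ₀ : 0 ≤ γ) (hγ₃ : γ < 3) (hK : 0 < K) :
    ∃ A > 0, HasGrowthControl Ω u A (growthExponent γ) := by
  have hc := growthExponent_pow_three_mul_sub_one_pos hγ₀ hγ₃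
  obtain ⟨A, hA, hA_eq⟩ := exists_pow_three_eq_mul_rpow hγ₃ (div_pos (mul_pos two_pos hK) hc)
  refine ⟨A, hA, hu.hasGrowthControl_of_lt huc hu₀ hγ₀ hγ₃ hK.le hA ?_⟩
  have hKA : 0 < K * A ^ γ := by positivity
  calc K * A ^ γ < 2 * (K * A ^ γ) := by linarith
    _ = growthExponent γ ^ 3 * (growthExponent γ - 1) * A ^ 3 := by
        rw [hA_eq, ← mul_assoc (growthExponent γ ^ 3 * (growthExponent γ - 1)),
          mul_div_cancel₀ _ hc.ne', mul_assoc]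

theorem IsViscSupersol.pos_of_pos_center {R : ℝ}
    (hu : IsViscSupersol (closedBall y R) u fun _ _ => 0)
    (huc : ContinuousOn u (closedBall y R)) (hu₀ : ∀ x ∈ closedBall y R, 0 ≤ u x)
    (huy : 0 < u y) : ∀ x ∈ ball y R, 0 < u x := by
  intro x hx
  have hR : 0 < R := pos_of_mem_ball hx
  set A := u y / R ^ growthExponent 0
  have hA : 0 < A := by positivity
  have hc := growthExponent_pow_three_mul_sub_one_pos le_rfl (zero_lt_three' ℝ)
  have hu' : IsViscSupersol (closedBall y R) u fun _ t => 0 * t ^ (0 : ℝ) := by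
    simpa only [zero_mul] using hu
  have hcontrol : HasGrowthControl (closedBall y R) u A (growthExponent 0) :=
    hu'.hasGrowthControl_of_lt huc hu₀ le_rfl zero_lt_three le_rfl hA (by rw [zero_mul]; positivity)
  exact hcontrol hR subset_rfl (div_mul_cancel₀ _ (by positivity)).le x hx

-- Smoothing `a * ‖x - y‖ ^ α` to `a * (‖x - y‖ ^ 2 + e) ^ (α / 2)` makes the comparison function
-- `C²` at the centre, where `α` may be less than `2`.
theorem IsViscSubsol.le_mul_norm_sq_add_rpow {k a r e : ℝ}
    (hu : IsViscSubsol (closedBall y r) u fun _ t => k * t ^ γ)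
    (huc : ContinuousOn u (closedBall y r)) (hγ₀ : 0 ≤ γ) (hγ₃ : γ < 3) (hk : 0 ≤ k) (ha : 0 < a)
    (hka : growthExponent γ ^ 4 * a ^ 3 < k * a ^ γ) (hr : 0 ≤ r) (he : 0 < e)
    (hsmall : ∀ z ∈ closedBall y r, u z < a * r ^ growthExponent γ) :
    ∀ x ∈ closedBall y r, u x ≤ a * (‖x - y‖ ^ 2 + e) ^ (growthExponent γ / 2) := by
  have hα := one_lt_growthExponent hγ₀ hγ₃
  have hαγ := growthExponent_mul hγ₃
  set α := growthExponent γ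
  have hP (x : EuclideanSpace ℝ (Fin n)) : 0 < ‖x - y‖ ^ 2 + e := by positivity
  have hv : ContDiff ℝ 2 fun x => a * (‖x - y‖ ^ 2 + e) ^ (α / 2) :=
    contDiff_const.mul ((((contDiff_id.sub contDiff_const).norm_sq ℝ).add
      contDiff_const).rpow_const_of_ne fun x => (hP x).ne')
  refine hu.le_of_forall_infLap_lt (isCompact_closedBall y r) huc hv.continuous.continuousOn
    fun x hx hlt => ⟨?_, hv.contDiffAt, ?_⟩
  · refine ball_subset_interior_closedBall (mem_ball_iff_norm.2 ?_)
    refine lt_of_le_of_ne (mem_closedBall_iff_norm.1 hx) fun heq => ?_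
    have hboundary : r ^ α ≤ (‖x - y‖ ^ 2 + e) ^ (α / 2) := by
      calc r ^ α = (r ^ 2) ^ (α / 2) := by
            rw [← Real.rpow_natCast_mul hr, Nat.cast_ofNat, mul_div_cancel₀ _ two_ne_zero]
        _ ≤ (‖x - y‖ ^ 2 + e) ^ (α / 2) := by
            rw [heq]
            gcongr
            exact le_add_of_nonneg_right he.le
    exact (hsmall x hx).not_ge ((mul_le_mul_of_nonneg_left hboundary ha.le).trans hlt.le)
  · calc infLap (fun z => a * (‖z - y‖ ^ 2 + e) ^ (α / 2)) x
        ≤ (2 * (α / 2)) ^ 4 * a ^ 3 * (‖x - y‖ ^ 2 + e) ^ (3 * (α / 2) - 2) :=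
          infLap_mul_norm_sq_add_rpow_le ha.le (by linarith) he
      _ = α ^ 4 * a ^ 3 * (‖x - y‖ ^ 2 + e) ^ (3 * (α / 2) - 2) := by ring_nf
      _ < k * a ^ γ * (‖x - y‖ ^ 2 + e) ^ (3 * (α / 2) - 2) := by gcongr
      _ = k * (a * (‖x - y‖ ^ 2 + e) ^ (α / 2)) ^ γ := by
          rw [Real.mul_rpow ha.le (by positivity), ← Real.rpow_mul (hP x).le, mul_assoc]
          congr 3
          linarith
      _ ≤ k * u x ^ γ := by gcongr

theorem IsViscSubsol.exists_mul_rpow_le {k a r : ℝ}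
    (hu : IsViscSubsol (closedBall y r) u fun _ t => k * t ^ γ)
    (huc : ContinuousOn u (closedBall y r)) (hγ₀ : 0 ≤ γ) (hγ₃ : γ < 3) (hk : 0 ≤ k) (ha : 0 < a)
    (hka : growthExponent γ ^ 4 * a ^ 3 < k * a ^ γ) (hr : 0 ≤ r) (huy : 0 < u y) :
    ∃ z ∈ closedBall y r, a * r ^ growthExponent γ ≤ u z := by
  by_contra! hsmall
  have hα : 0 < growthExponent γ / 2 := half_pos (one_pos.trans (one_lt_growthExponent hγ₀ hγ₃))
  have hle : ∀ e > 0, u y ≤ a * e ^ (growthExponent γ / 2) := by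
    intro e he
    simpa using hu.le_mul_norm_sq_add_rpow huc hγ₀ hγ₃ hk ha hka hr he hsmall y
      (mem_closedBall_self hr)
  have hlim : Tendsto (fun e : ℝ => a * e ^ (growthExponent γ / 2)) (nhdsWithin 0 (Ioi 0))
      (nhds 0) := by
    have hcont : Continuous fun e : ℝ => a * e ^ (growthExponent γ / 2) :=
      continuous_const.mul (Real.continuous_rpow_const hα.le)
    simpa [Real.zero_rpow hα.ne'] using (hcont.tendsto 0).mono_left nhdsWithin_le_nhds
  exact huy.not_ge (ge_of_tendsto hlim (eventually_mem_nhdsWithin.mono hle))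

theorem IsViscSubsol.exists_isNondegenerate {k : ℝ}
    (hu : IsViscSubsol Ω u fun _ t => k * t ^ γ)
    (huc : ContinuousOn u Ω) (hγ₀ : 0 ≤ γ) (hγ₃ : γ < 3) (hk : 0 < k) :
    ∃ a > 0, IsNondegenerate Ω u a (growthExponent γ) := by
  have hα : 0 < growthExponent γ := one_pos.trans (one_lt_growthExponent hγ₀ hγ₃)
  obtain ⟨a, ha, ha_eq⟩ :=
    exists_pow_three_eq_mul_rpow (L := k / (2 * growthExponent γ ^ 4)) hγ₃ (by positivity)
  refine ⟨a, ha, fun y r hr hsub huy => ?_⟩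
  refine (hu.mono hsub fun _ _ => le_rfl).exists_mul_rpow_le (huc.mono hsub) hγ₀ hγ₃ hk.le ha
    ?_ hr.le huy
  have hka : 0 < k * a ^ γ := by positivity
  calc growthExponent γ ^ 4 * a ^ 3 = k * a ^ γ / 2 := by
        rw [ha_eq]
        field_simp
    _ < k * a ^ γ := by linarith

end Growth

section Nonlinearity

variable {f : ℝ → ℝ} {M N γ T : ℝ}

theorem Cond51.nonneg (hf : Cond51 f N γ) (hN : 0 < N) {t : ℝ} (ht : 0 < t) : 0 ≤ f t := by
  obtain ⟨δ, hδ, h⟩ := hf t ht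
  exact nonneg_of_mul_nonneg_right (h t ht le_rfl δ hδ le_rfl).2 (by positivity)

-- A zero of `f` spreads to an interval `(0, s₀]` by (1.2), and from there to all of `(0, ∞)`
-- by (5.1).
theorem eq_zero_of_cond12_of_cond51 (hf12 : Cond12 f M γ) (hf51 : Cond51 f N γ) (hN : 0 < N)
    {t₀ : ℝ} (ht₀ : 0 < t₀) (hft₀ : f t₀ = 0) {t : ℝ} (ht : 0 < t) : f t = 0 := by
  obtain ⟨δ₁, hδ₁, h12⟩ := hf12 t₀ ht₀
  obtain ⟨δ₂, hδ₂, h51⟩ := hf51 t ht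
  set δ := min δ₂ (δ₁ * t₀ / t)
  have hδ : 0 < δ := by positivity
  have hδ_le : δ * t / t₀ ≤ δ₁ := by
    rw [div_le_iff₀ ht₀, ← le_div_iff₀ ht]
    exact min_le_right _ _
  have hfδ : f (δ * t) ≤ 0 := by
    simpa [hft₀, div_mul_cancel₀ _ ht₀.ne'] using
      (h12 t₀ ht₀ le_rfl (δ * t / t₀) (by positivity) hδ_le).2
  have hle : N * δ ^ γ * f t ≤ 0 := (h51 t ht le_rfl δ hδ (min_le_left _ _)).1.trans hfδ
  exact le_antisymm (nonpos_of_mul_nonpos_right hle (by positivity)) (hf51.nonneg hN ht)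

theorem eq_zero_or_pos_of_cond12_of_cond51 (hf12 : Cond12 f M γ) (hf51 : Cond51 f N γ)
    (hfc : ContinuousOn f (Ici 0)) (hN : 0 < N) : (∀ t ≥ 0, f t = 0) ∨ ∀ t > 0, 0 < f t := by
  by_cases hzero : ∃ t₀ > 0, f t₀ = 0
  · obtain ⟨t₀, ht₀, hft₀⟩ := hzero
    have hIoi : EqOn f (fun _ => 0) (Ioi 0) := fun t ht =>
      eq_zero_of_cond12_of_cond51 hf12 hf51 hN ht₀ hft₀ ht
    exact Or.inl (hIoi.of_subset_closure hfc continuousOn_const Ioi_subset_Ici_self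
      (closure_Ioi (0 : ℝ)).ge)
  · push Not at hzero
    exact Or.inr fun t ht => lt_of_le_of_ne (hf51.nonneg hN ht) (hzero t ht).symm

theorem continuousOn_div_rpow (hfc : ContinuousOn f (Ici 0)) {s₀ : ℝ} (hs₀ : 0 < s₀) :
    ContinuousOn (fun s => f s / s ^ γ) (Icc s₀ T) := by
  have hpos : ∀ s ∈ Icc s₀ T, 0 < s := fun s hs => hs₀.trans_le hs.1
  refine (hfc.mono fun s hs => (hpos s hs).le).div ?_ fun s hs =>
    (Real.rpow_pos_of_pos (hpos s hs) γ).ne'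
  exact continuousOn_id.rpow_const fun s hs => Or.inl (hpos s hs).ne'

theorem Cond12.exists_le_mul_rpow (hf : Cond12 f M γ) (hfc : ContinuousOn f (Ici 0))
    (hγ : 0 ≤ γ) (hT : 0 < T) : ∃ K > 0, ∀ s ∈ Icc 0 T, f s ≤ K * s ^ γ := by
  obtain ⟨δ, hδ, h12⟩ := hf T hT
  obtain ⟨C, hC⟩ := (isCompact_Icc.image_of_continuousOn
    (continuousOn_div_rpow (γ := γ) (T := T) hfc (mul_pos hδ hT))).bddAbove
  set K := max 1 (max C (M * f T / T ^ γ))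
  have hIoc : ∀ s ∈ Ioc 0 T, f s ≤ K * s ^ γ := by
    rintro s ⟨hs, hsT⟩
    rw [← div_le_iff₀ (by positivity)]
    rcases le_total s (δ * T) with hsδ | hsδ
    · have hle := (h12 T hT le_rfl (s / T) (by positivity) ((div_le_iff₀ hT).2 hsδ)).2
      rw [div_mul_cancel₀ _ hT.ne', Real.div_rpow hs.le hT.le] at hle
      calc f s / s ^ γ ≤ M * (s ^ γ / T ^ γ) * f T / s ^ γ := by gcongr
        _ = M * f T / T ^ γ := by field_simp
        _ ≤ K := (le_max_right _ _).trans (le_max_right _ _)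
    · calc f s / s ^ γ ≤ C := hC (mem_image_of_mem _ ⟨hsδ, hsT⟩)
        _ ≤ K := (le_max_left _ _).trans (le_max_right _ _)
  refine ⟨K, one_pos.trans_le (le_max_left _ _), fun s hs => ?_⟩
  rw [← closure_Ioc hT.ne] at hs
  refine le_on_closure hIoc ?_ ?_ hs
  · exact hfc.mono (closure_Ioc hT.ne ▸ Icc_subset_Ici_self)
  · exact (continuous_const.mul (Real.continuous_rpow_const hγ)).continuousOn

theorem Cond51.exists_mul_rpow_le (hf : Cond51 f N γ) (hfc : ContinuousOn f (Ici 0))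
    (hpos : ∀ t > 0, 0 < f t) (hN : 0 < N) (hγ : 0 ≤ γ) (hT : 0 < T) :
    ∃ k > 0, ∀ s ∈ Icc 0 T, k * s ^ γ ≤ f s := by
  obtain ⟨δ, hδ, h51⟩ := hf T hT
  have hfT := hpos T hT
  obtain ⟨c, hc, hcle⟩ : ∃ c > 0, ∀ s ∈ Icc (δ * T) T, c ≤ f s / s ^ γ := by
    refine isCompact_Icc.exists_forall_le' (continuousOn_div_rpow hfc (by positivity)) ?_
    intro s hs
    have hs₀ : 0 < s := (mul_pos hδ hT).trans_le hs.1
    exact div_pos (hpos s hs₀) (by positivity)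
  set k := min c (N * f T / T ^ γ)
  have hIoc : ∀ s ∈ Ioc 0 T, k * s ^ γ ≤ f s := by
    rintro s ⟨hs, hsT⟩
    rw [← le_div_iff₀ (by positivity)]
    rcases le_total s (δ * T) with hsδ | hsδ
    · have hle := (h51 T hT le_rfl (s / T) (by positivity) ((div_le_iff₀ hT).2 hsδ)).1
      rw [div_mul_cancel₀ _ hT.ne', Real.div_rpow hs.le hT.le] at hle
      calc k ≤ N * f T / T ^ γ := min_le_right _ _
        _ = N * (s ^ γ / T ^ γ) * f T / s ^ γ := by field_simp
        _ ≤ f s / s ^ γ := by gcongr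
    · exact (min_le_left _ _).trans (hcle s ⟨hsδ, hsT⟩)
  refine ⟨k, by positivity, fun s hs => ?_⟩
  rw [← closure_Ioc hT.ne] at hs
  refine le_on_closure hIoc ?_ ?_ hs
  · exact (continuous_const.mul (Real.continuous_rpow_const hγ)).continuousOn
  · exact hfc.mono (closure_Ioc hT.ne ▸ Icc_subset_Ici_self)

end Nonlinearity

section Porosity

variable {n : ℕ} {Ω E : Set (EuclideanSpace ℝ (Fin n))} {u : EuclideanSpace ℝ (Fin n) → ℝ}

theorem IsPorousWith.mono {E' : Set (EuclideanSpace ℝ (Fin n))} {σ : ℝ} (hE : IsPorousWith E σ)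
    (hE' : E' ⊆ E) : IsPorousWith E' σ := by
  obtain ⟨R, hR, h⟩ := hE
  refine ⟨R, hR, fun x hx r hr hrR => ?_⟩
  obtain ⟨y, hy⟩ := h x (hE' hx) r hr hrR
  exact ⟨y, hy.trans (sdiff_subset_sdiff_right hE')⟩

theorem exists_isPorousWith_of_hasGrowthControl_of_isNondegenerate {A a α δ : ℝ}
    (hcontrol : HasGrowthControl Ω u A α) (hnondeg : IsNondegenerate Ω u a α)
    (hA : 0 < A) (ha : 0 < a) (hα : 0 < α) (hδ : 0 < δ) (hEδ : ∀ x ∈ E, closedBall x δ ⊆ Ω)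
    (hE₀ : ∀ x ∈ E, u x = 0) (hE : E ⊆ closure {x | 0 < u x}) :
    ∃ σ : ℝ, 0 < σ ∧ σ < 1 ∧ IsPorousWith E σ := by
  -- `σ` is chosen so that `A * (σ * r) ^ α ≤ a * (r / 4) ^ α`.
  obtain ⟨σ, hσ, hσ_half, hσ_le⟩ : ∃ σ > 0, σ ≤ 1 / 2 ∧ σ ≤ (a / A) ^ α⁻¹ / 4 :=
    ⟨min (1 / 2) ((a / A) ^ α⁻¹ / 4), by positivity, min_le_left _ _, min_le_right _ _⟩
  refine ⟨σ, hσ, by linarith, δ, hδ, fun x hx r hr hrδ => ?_⟩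
  obtain ⟨y, huy, hxy⟩ := Metric.mem_closure_iff.1 (hE hx) (r / 4) (by positivity)
  rw [dist_comm] at hxy
  obtain ⟨z, hz, huz⟩ := hnondeg (by positivity : 0 < r / 4)
    ((closedBall_subset_closedBall' (by linarith)).trans (hEδ x hx)) huy
  have hzx : dist z x ≤ r / 2 := by
    linarith [dist_triangle z y x, mem_closedBall.1 hz]
  have hσr : σ * r ≤ r / 2 := by nlinarith
  have hσr_le : σ * r ≤ (a / A) ^ α⁻¹ * (r / 4) := by nlinarith
  have huz' : A * (σ * r) ^ α ≤ u z :=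
    calc A * (σ * r) ^ α ≤ A * ((a / A) ^ α⁻¹ * (r / 4)) ^ α :=
          mul_le_mul_of_nonneg_left (Real.rpow_le_rpow (by positivity) hσr_le hα.le) hA.le
      _ = a * (r / 4) ^ α := by
          rw [Real.mul_rpow (by positivity) (by positivity),
            Real.rpow_inv_rpow (by positivity) hα.ne', ← mul_assoc, mul_div_cancel₀ _ hA.ne']
      _ ≤ u z := huz
  have hball_pos := hcontrol (mul_pos hσ hr)
    ((closedBall_subset_closedBall' (by linarith)).trans (hEδ x hx)) huz'
  exact ⟨z, fun w hw => ⟨ball_subset_ball' (by linarith) hw,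
    fun hwE => (hball_pos w hw).ne' (hE₀ w hwE)⟩⟩

theorem IsViscSupersol.exists_isPorousWith {K k γ δ : ℝ}
    (hsup : IsViscSupersol Ω u fun _ t => K * t ^ γ) (hsub : IsViscSubsol Ω u fun _ t => k * t ^ γ)
    (huc : ContinuousOn u Ω) (hu₀ : ∀ x ∈ Ω, 0 ≤ u x)
    (hγ₀ : 0 ≤ γ) (hγ₃ : γ < 3) (hK : 0 < K) (hk : 0 < k)
    (hδ : 0 < δ) (hEδ : ∀ x ∈ E, closedBall x δ ⊆ Ω)
    (hE₀ : ∀ x ∈ E, u x = 0) (hE : E ⊆ closure {x | 0 < u x}) :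
    ∃ σ : ℝ, 0 < σ ∧ σ < 1 ∧ IsPorousWith E σ := by
  obtain ⟨A, hA, hcontrol⟩ := hsup.exists_hasGrowthControl huc hu₀ hγ₀ hγ₃ hK
  obtain ⟨a, ha, hnondeg⟩ := hsub.exists_isNondegenerate huc hγ₀ hγ₃ hk
  exact exists_isPorousWith_of_hasGrowthControl_of_isNondegenerate hcontrol hnondeg hA ha
    (one_pos.trans (one_lt_growthExponent hγ₀ hγ₃)) hδ hEδ hE₀ hE

theorem IsViscSupersol.eq_empty_of_subset_closure_pos {δ : ℝ}
    (hu : IsViscSupersol Ω u fun _ _ => 0) (huc : ContinuousOn u Ω) (hu₀ : ∀ x ∈ Ω, 0 ≤ u x)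
    (hδ : 0 < δ) (hEδ : ∀ x ∈ E, closedBall x δ ⊆ Ω)
    (hE₀ : ∀ x ∈ E, u x = 0) (hE : E ⊆ closure {x | 0 < u x}) : E = ∅ := by
  refine eq_empty_iff_forall_notMem.2 fun x hx => ?_
  obtain ⟨y, huy, hxy⟩ := Metric.mem_closure_iff.1 (hE hx) (δ / 2) (by positivity)
  have hsub : closedBall y (δ / 2) ⊆ Ω :=
    (closedBall_subset_closedBall' (by rw [dist_comm]; linarith)).trans (hEδ x hx)
  have hux := (hu.mono hsub fun _ _ => le_rfl).pos_of_pos_center (huc.mono hsub)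
    (fun z hz => hu₀ z (hsub hz)) huy x hxy
  exact hux.ne' (hE₀ x hx)

theorem eq_zero_of_mem_frontier_pos (hΩ : IsOpen Ω) (huc : ContinuousOn u Ω)
    (hu₀ : ∀ x ∈ Ω, 0 ≤ u x) {x : EuclideanSpace ℝ (Fin n)} (hxΩ : x ∈ Ω)
    (hx : x ∈ frontier {x | x ∈ Ω ∧ 0 < u x}) : u x = 0 := by
  have hopen : IsOpen {x | x ∈ Ω ∧ 0 < u x} := huc.isOpen_inter_preimage hΩ isOpen_Ioi
  rw [hopen.frontier_eq] at hx
  exact le_antisymm (not_lt.1 fun hpos => hx.2 ⟨hxΩ, hpos⟩) (hu₀ x hxΩ)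

end Porosity

theorem free_boundary_porous_general {n : ℕ} {Ω : Set (EuclideanSpace ℝ (Fin n))}
    (hΩo : IsOpen Ω) {f : ℝ → ℝ} {M N γ : ℝ} (hN : 0 < N) (hγ0 : 0 ≤ γ) (hγ3 : γ < 3)
    (hfc : ContinuousOn f (Ici 0)) (hf12 : Cond12 f M γ) (hf51 : Cond51 f N γ)
    {u : EuclideanSpace ℝ (Fin n) → ℝ} (huc : ContinuousOn u Ω) (hu0 : ∀ x ∈ Ω, 0 ≤ u x)
    (hsol : IsViscSol Ω u (fun _ t => f t))
    {C : Set (EuclideanSpace ℝ (Fin n))} (hC : IsCompact C) (hCΩ : C ⊆ Ω) :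
    ∃ σ : ℝ, 0 < σ ∧ σ < 1 ∧ IsPorousWith (frontier {x | x ∈ Ω ∧ 0 < u x} ∩ C) σ := by
  set E := frontier {x | x ∈ Ω ∧ 0 < u x} ∩ C
  have hE₀ : ∀ x ∈ E, u x = 0 := fun x hx =>
    eq_zero_of_mem_frontier_pos hΩo huc hu0 (hCΩ hx.2) hx.1
  have hE : E ⊆ closure {x | 0 < u x} := fun x hx =>
    closure_mono (fun _ hz => hz.2) (frontier_subset_closure hx.1)
  obtain ⟨δ, hδ, hDΩ⟩ := hC.exists_cthickening_subset_open hΩo hCΩ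
  set D := cthickening δ C
  have hED : ∀ x ∈ E, closedBall x δ ⊆ D := fun x hx => closedBall_subset_cthickening hx.2 δ
  have hucD : ContinuousOn u D := huc.mono hDΩ
  have hu0D : ∀ x ∈ D, 0 ≤ u x := fun x hx => hu0 x (hDΩ hx)
  rcases eq_zero_or_pos_of_cond12_of_cond51 hf12 hf51 hfc hN with hzero | hpos
  · have hE_empty : E = ∅ := (hsol.1.mono hDΩ fun x hx => (hzero _ (hu0D x hx)).le
      ).eq_empty_of_subset_closure_pos hucD hu0D hδ hED hE₀ hE
    exact ⟨1 / 2, by norm_num, by norm_num, 1, one_pos, by simp [hE_empty]⟩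
  · obtain ⟨B, hB⟩ := hC.cthickening.bddAbove_image hucD
    have hT : 0 < max B 1 := by positivity
    have huT : ∀ x ∈ D, u x ∈ Icc 0 (max B 1) := fun x hx =>
      ⟨hu0D x hx, (hB (mem_image_of_mem u hx)).trans (le_max_left _ _)⟩
    obtain ⟨K, hK, hfK⟩ := hf12.exists_le_mul_rpow hfc hγ0 hT
    obtain ⟨k, hk, hfk⟩ := hf51.exists_mul_rpow_le hfc hpos hN hγ0 hT
    exact (hsol.1.mono hDΩ fun x hx => hfK _ (huT x hx)).exists_isPorousWith
      (hsol.2.mono hDΩ fun x hx => hfk _ (huT x hx)) hucD hu0D hγ0 hγ3 hK hk hδ hED hE₀ hE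

/-- Porosity of the free boundary (Corollary 4.1). -/
theorem free_boundary_porous {n : ℕ} (Ω : Set (EuclideanSpace ℝ (Fin n))) (hΩo : IsOpen Ω)
    (f : ℝ → ℝ) (M N γ : ℝ) (hM : 0 < M) (hN : 0 < N) (hγ0 : 0 ≤ γ) (hγ3 : γ < 3)
    (hfc : ContinuousOn f (Ici 0)) (hfmono : MonotoneOn f (Ici 0))
    (hf12 : Cond12 f M γ) (hf51 : Cond51 f N γ)
    (u : EuclideanSpace ℝ (Fin n) → ℝ)
    (huc : ContinuousOn u Ω) (hu0 : ∀ x ∈ Ω, 0 ≤ u x)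
    (hub : ∃ B, ∀ x ∈ Ω, u x ≤ B)
    (hsol : IsViscSol Ω u (fun _ t => f t))
    (Ω' : Set (EuclideanSpace ℝ (Fin n))) (hΩ'o : IsOpen Ω')
    (hΩ'cpt : IsCompact (closure Ω')) (hΩ'sub : closure Ω' ⊆ Ω) :
    ∃ σ : ℝ, 0 < σ ∧ σ < 1 ∧
      IsPorousWith (frontier {x | x ∈ Ω ∧ 0 < u x} ∩ Ω') σ := by
  obtain ⟨σ, hσ0, hσ1, hσ⟩ :=
    free_boundary_porous_general hΩo hN hγ0 hγ3 hfc hf12 hf51 huc hu0 hsol hΩ'cpt hΩ'sub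
  exact ⟨σ, hσ0, hσ1, hσ.mono (inter_subset_inter_right _ subset_closure)⟩
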